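/- arXiv:2309.02858 — 13 statements merged into one kernel-verified Lean document; each statement's English description precedes it below -/
import Mathlib

section
/- In the finite discriminative clustering setup, for every real α > 0 with α ≠ 1, the one-vs-all α-divergence GEMINI satisfies I_α^{ova} := ∑_{k=1}^K π(k) · ∑_{x∈X} p(x) · f_α(c(x,k)/π(k)) ≤ (α(α−1))^{-1} · (−1 + ∑_{k=1}^K π(k)^{2−α}), an upper bound depending only on the cluster proportions. -/
open Finset

/-- In the finite discriminative clustering setup, for every real
`α > 0` with `α ≠ 1`, the one-vs-all α-divergence GEMINI is upper bounded by
`(α(α−1))⁻¹ · (−1 + ∑ₖ π(k)^{2−α})`, a bound depending only on the cluster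
proportions. -/
theorem gemini_ova_alpha_div_upper_bound
    {X : Type*} [Fintype X] [Nonempty X]
    (p : X → ℝ) (hp : ∀ x, 0 < p x) (hp1 : ∑ x, p x = 1)
    (K : ℕ) (hK : 0 < K)
    (c : X → Fin K → ℝ) (hc : ∀ x k, 0 ≤ c x k) (hc1 : ∀ x, ∑ k, c x k = 1)
    (pr : Fin K → ℝ) (hpr : ∀ k, pr k = ∑ x, p x * c x k) (hprpos : ∀ k, 0 < pr k)
    (α : ℝ) (hα : 0 < α) (hα1 : α ≠ 1) :
    ∑ k, pr k * ∑ x, p x *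
        (((c x k / pr k) ^ α - α * (c x k / pr k) + (α - 1)) / (α * (α - 1)))
      ≤ (α * (α - 1))⁻¹ * (-1 + ∑ k, pr k ^ (2 - α)) := by
  have hsum : ∑ k, pr k = 1 := by
    simp_rw [hpr]
    rw [Finset.sum_comm]
    simp_rw [← Finset.mul_sum, hc1, mul_one]
    exact hp1
  have hA : α * (α - 1) ≠ 0 := mul_ne_zero hα.ne' (sub_ne_zero.mpr hα1)
  have key : ∀ x k, (c x k) ^ α * (α * (α - 1))⁻¹ ≤ c x k * (α * (α - 1))⁻¹ := by
    intro x k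
    have h0 := hc x k
    have h1 : c x k ≤ 1 := by
      rw [← hc1 x]
      exact Finset.single_le_sum (fun i _ => hc x i) (Finset.mem_univ k)
    rcases lt_or_gt_of_ne hα1 with h | h
    · have hneg : (α * (α - 1))⁻¹ ≤ 0 := by
        apply inv_nonpos.mpr
        nlinarith
      exact mul_le_mul_of_nonpos_right (Real.self_le_rpow_of_le_one h0 h1 h.le) hneg
    · have hpos : 0 ≤ (α * (α - 1))⁻¹ := by
        apply inv_nonneg.mpr
        nlinarith
      exact mul_le_mul_of_nonneg_right (Real.rpow_le_self_of_le_one h0 h1 h.le) hpos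
  have hk : ∀ k, pr k * ∑ x, p x *
        (((c x k / pr k) ^ α - α * (c x k / pr k) + (α - 1)) / (α * (α - 1)))
      ≤ (α * (α - 1))⁻¹ * (pr k ^ (2 - α) - pr k) := by
    intro k
    have hk0 := hprpos k
    have hb : ∑ x, p x *
        (((c x k / pr k) ^ α - α * (c x k / pr k) + (α - 1)) / (α * (α - 1)))
        ≤ ∑ x, ((p x * c x k) * ((α * (α - 1))⁻¹ * ((pr k ^ α)⁻¹ - α / pr k))
            + p x * ((α - 1) * (α * (α - 1))⁻¹)) := by
      apply Finset.sum_le_sum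
      intro x _
      rw [Real.div_rpow (hc x k) hk0.le]
      have h2 := mul_le_mul_of_nonneg_left (key x k)
        (mul_nonneg (hp x).le (inv_nonneg.mpr (Real.rpow_nonneg hk0.le α)))
      simp only [div_eq_mul_inv]
      linarith
    rw [Finset.sum_add_distrib, ← Finset.sum_mul, ← Finset.sum_mul, ← hpr, hp1] at hb
    refine (mul_le_mul_of_nonneg_left hb hk0.le).trans (le_of_eq ?_)
    rw [Real.rpow_sub hk0, Real.rpow_two]
    have := (Real.rpow_pos_of_pos hk0 α).ne'
    have h1 : α - 1 ≠ 0 := sub_ne_zero.mpr hα1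
    field_simp
    ring
  refine (Finset.sum_le_sum fun k _ => hk k).trans (le_of_eq ?_)
  rw [← Finset.mul_sum, Finset.sum_sub_distrib, hsum]
  ring
end

section
/- In the finite discriminative clustering setup, for every real α > 0 with α ≠ 1, if the clustering is a Dirac model then the one-vs-all α-divergence GEMINI attains its upper bound: I_α^{ova} := ∑_{k=1}^K π(k) · ∑_{x∈X} p(x) · f_α(c(x,k)/π(k)) = (α(α−1))^{-1} · (−1 + ∑_{k=1}^K π(k)^{2−α}). -/
open Finset

/-- In the finite discriminative clustering setup, for every real
`α > 0` with `α ≠ 1`, a Dirac clustering model attains the upper bound of the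
one-vs-all α-divergence GEMINI. -/
theorem gemini_ova_alpha_div_dirac_attains_bound
    {X : Type*} [Fintype X] [Nonempty X]
    (p : X → ℝ) (hp : ∀ x, 0 < p x) (hp1 : ∑ x, p x = 1)
    (K : ℕ) (hK : 0 < K)
    (c : X → Fin K → ℝ) (hc : ∀ x k, 0 ≤ c x k) (hc1 : ∀ x, ∑ k, c x k = 1)
    (pr : Fin K → ℝ) (hpr : ∀ k, pr k = ∑ x, p x * c x k) (hprpos : ∀ k, 0 < pr k)
    (hdirac : ∀ x k, c x k = 0 ∨ c x k = 1)
    (α : ℝ) (hα : 0 < α) (hα1 : α ≠ 1) :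
    ∑ k, pr k * ∑ x, p x *
        (((c x k / pr k) ^ α - α * (c x k / pr k) + (α - 1)) / (α * (α - 1)))
      = (α * (α - 1))⁻¹ * (-1 + ∑ k, pr k ^ (2 - α)) := by
  have hsum : ∑ k, pr k = 1 := by
    simp_rw [hpr]
    rw [Finset.sum_comm]
    simp_rw [← Finset.mul_sum, hc1, mul_one]
    exact hp1
  have key : ∀ k, pr k * ∑ x, p x *
        (((c x k / pr k) ^ α - α * (c x k / pr k) + (α - 1)) / (α * (α - 1)))
      = (α * (α - 1))⁻¹ * (pr k ^ (2 - α) - pr k) := by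
    intro k
    have h0 := hprpos k
    have hx : ∀ x, p x *
        (((c x k / pr k) ^ α - α * (c x k / pr k) + (α - 1)) / (α * (α - 1)))
        = (α * (α - 1))⁻¹ * (((pr k) ^ (-α) - α / pr k) * (p x * c x k) + (α - 1) * p x) := by
      intro x
      have hpow : (c x k / pr k) ^ α = c x k * (pr k) ^ (-α) := by
        rcases hdirac x k with h | h
        · rw [h, zero_div, Real.zero_rpow hα.ne', zero_mul]
        · rw [h, one_div, Real.inv_rpow h0.le, Real.rpow_neg h0.le, one_mul]
      rw [hpow, div_eq_mul_inv _ (α * (α - 1))]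
      ring
    have h2 : pr k ^ (2 - α) = pr k ^ (-α) * pr k * pr k := by
      rw [show (2 - α) = -α + 1 + 1 by ring, Real.rpow_add h0, Real.rpow_add h0, Real.rpow_one]
    simp_rw [hx]
    rw [← Finset.mul_sum, Finset.sum_add_distrib, ← Finset.mul_sum, ← Finset.mul_sum, hp1,
      ← hpr k, h2]
    have h3 : α / pr k * pr k = α := div_mul_cancel₀ _ h0.ne'
    rw [sub_mul, h3]
    ring
  simp_rw [key]
  rw [← Finset.mul_sum, Finset.sum_sub_distrib, hsum]
  ring
end

section
/- In the finite discriminative clustering setup, for α = 2 (the Pearson χ²-divergence), the one-vs-all α-divergence GEMINI satisfies I_2^{ova} := ∑_{k=1}^K π(k) · ∑_{x∈X} p(x) · f_2(c(x,k)/π(k)) ≤ (K−1)/2, an upper bound independent of the cluster proportions; moreover every Dirac model attains I_2^{ova} = (K−1)/2. -/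
open Finset

/-- For `α = 2` (Pearson χ²-divergence), the one-vs-all
α-divergence GEMINI is upper bounded by `(K−1)/2`, independently of the cluster
proportions, and every Dirac model attains this bound. -/
theorem gemini_ova_pearson_chi_sq_bound
    {X : Type*} [Fintype X] [Nonempty X]
    (p : X → ℝ) (hp : ∀ x, 0 < p x) (hp1 : ∑ x, p x = 1)
    (K : ℕ) (hK : 0 < K)
    (c : X → Fin K → ℝ) (hc : ∀ x k, 0 ≤ c x k) (hc1 : ∀ x, ∑ k, c x k = 1)
    (pr : Fin K → ℝ) (hpr : ∀ k, pr k = ∑ x, p x * c x k) (hprpos : ∀ k, 0 < pr k) :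
    (∑ k, pr k * ∑ x, p x *
        (((c x k / pr k) ^ 2 - 2 * (c x k / pr k) + 1) / 2)
      ≤ ((K : ℝ) - 1) / 2)
    ∧ ((∀ x k, c x k = 0 ∨ c x k = 1) →
      ∑ k, pr k * ∑ x, p x *
          (((c x k / pr k) ^ 2 - 2 * (c x k / pr k) + 1) / 2)
        = ((K : ℝ) - 1) / 2) := by
  have hsum : ∑ k, pr k = 1 := by
    simp_rw [hpr]
    rw [Finset.sum_comm]
    simp_rw [← Finset.mul_sum, hc1, mul_one]
    exact hp1
  have key : ∀ k, pr k * ∑ x, p x *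
        (((c x k / pr k) ^ 2 - 2 * (c x k / pr k) + 1) / 2)
      = ((∑ x, p x * c x k ^ 2) / pr k - pr k) / 2 := by
    intro k
    have h0 : pr k ≠ 0 := (hprpos k).ne'
    have e : ∑ x, p x * (((c x k / pr k) ^ 2 - 2 * (c x k / pr k) + 1) / 2)
        = (∑ x, p x * c x k ^ 2) * (1 / (2 * pr k ^ 2))
          - (∑ x, p x * c x k) * (1 / pr k) + (∑ x, p x) * (1 / 2) := by
      rw [Finset.sum_mul, Finset.sum_mul, Finset.sum_mul, ← Finset.sum_sub_distrib,
        ← Finset.sum_add_distrib]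
      refine Finset.sum_congr rfl fun x _ => ?_
      field_simp
    rw [e, ← hpr, hp1]
    field_simp
    ring
  have hcard : ((K : ℝ) - 1) / 2 = ∑ k, (1 - pr k) / 2 := by
    rw [← Finset.sum_div, Finset.sum_sub_distrib, hsum]
    simp
  simp_rw [key]
  rw [hcard]
  constructor
  · refine Finset.sum_le_sum fun k _ => ?_
    have hle : (∑ x, p x * c x k ^ 2) / pr k ≤ 1 := by
      rw [div_le_one (hprpos k), hpr]
      refine Finset.sum_le_sum fun x _ => ?_
      have h1 : c x k ≤ 1 := by
        rw [← hc1 x]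
        exact Finset.single_le_sum (fun j _ => hc x j) (Finset.mem_univ k)
      exact mul_le_mul_of_nonneg_left (by nlinarith [hc x k]) (hp x).le
    linarith
  · intro hd
    refine Finset.sum_congr rfl fun k _ => ?_
    have heq : ∑ x, p x * c x k ^ 2 = pr k := by
      rw [hpr]
      refine Finset.sum_congr rfl fun x _ => ?_
      rcases hd x k with h | h <;> simp [h]
    rw [heq, div_self (hprpos k).ne']
end

section
/- In the finite discriminative clustering setup with strictly positive posterior (c(x,k) > 0 for all x, k), for every convex function f : (0,∞) → ℝ with f(1) = 0, the one-vs-all f-divergence GEMINI is at most the one-vs-one f-divergence GEMINI: ∑_{k=1}^K π(k)·D_f(q_k‖p) ≤ ∑_{a=1}^K ∑_{b=1}^K π(a)·π(b)·D_f(q_a‖q_b). -/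
open Finset

/-- In the finite discriminative clustering setup with strictly
positive posterior, for every convex `f : (0,∞) → ℝ` with `f(1) = 0`, the
one-vs-all f-divergence GEMINI is at most the one-vs-one f-divergence GEMINI. -/
theorem gemini_ova_le_ovo_fdiv
    {X : Type*} [Fintype X] [Nonempty X]
    (p : X → ℝ) (hp : ∀ x, 0 < p x) (hp1 : ∑ x, p x = 1)
    (K : ℕ) (hK : 0 < K)
    (c : X → Fin K → ℝ) (hcpos : ∀ x k, 0 < c x k) (hc1 : ∀ x, ∑ k, c x k = 1)
    (pr : Fin K → ℝ) (hpr : ∀ k, pr k = ∑ x, p x * c x k) (hprpos : ∀ k, 0 < pr k)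
    (q : Fin K → X → ℝ) (hq : ∀ k x, q k x = p x * c x k / pr k)
    (f : ℝ → ℝ) (hf : ConvexOn ℝ (Set.Ioi 0) f) (hf1 : f 1 = 0) :
    ∑ k, pr k * ∑ x, p x * f (q k x / p x)
      ≤ ∑ a, ∑ b, pr a * pr b * ∑ x, q b x * f (q a x / q b x) := by
  have hsum : ∑ k, pr k = 1 := by
    simp only [hpr]
    rw [Finset.sum_comm]
    simp only [← Finset.mul_sum, hc1, mul_one, hp1]
  have hqpos : ∀ k x, 0 < q k x := by
    intro k x
    rw [hq]
    exact div_pos (mul_pos (hp x) (hcpos x k)) (hprpos k)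
  have hw : ∀ k x, pr k * q k x = p x * c x k := by
    intro k x
    rw [hq]
    have := (hprpos k).ne'
    field_simp
  have key : ∀ a x, p x * f (q a x / p x) ≤ ∑ b, pr b * (q b x * f (q a x / q b x)) := by
    intro a x
    have hj := hf.map_sum_le (t := Finset.univ) (w := fun b => c x b)
      (p := fun b => q a x / q b x) (fun b _ => (hcpos x b).le) (hc1 x)
      (fun b _ => div_pos (hqpos a x) (hqpos b x))
    simp only [smul_eq_mul] at hj
    have hpx := (hp x).ne'
    have e : ∑ b, c x b * (q a x / q b x) = q a x / p x := by
      have : ∀ b, c x b * (q a x / q b x) = pr b * (q a x / p x) := by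
        intro b
        have h1 := (hqpos b x).ne'
        have h2 := hw b x
        field_simp
        linear_combination (-q a x) * h2
      simp only [this, ← Finset.sum_mul, hsum, one_mul]
    rw [e] at hj
    calc p x * f (q a x / p x) ≤ p x * ∑ b, c x b * f (q a x / q b x) :=
          mul_le_mul_of_nonneg_left hj (hp x).le
      _ = _ := by
          rw [Finset.mul_sum]
          refine Finset.sum_congr rfl fun b _ => ?_
          rw [← mul_assoc, ← mul_assoc, hw]
  refine Finset.sum_le_sum fun a _ => ?_
  calc pr a * ∑ x, p x * f (q a x / p x)
      ≤ pr a * ∑ x, ∑ b, pr b * (q b x * f (q a x / q b x)) :=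
        mul_le_mul_of_nonneg_left (Finset.sum_le_sum fun x _ => key a x) (hprpos a).le
    _ = _ := by
        rw [Finset.sum_comm, Finset.mul_sum]
        refine Finset.sum_congr rfl fun b _ => ?_
        rw [← Finset.mul_sum, mul_assoc]
end

section
/- In the finite discriminative clustering setup, for every nonempty uniformly bounded family F of functions X → ℝ, the one-vs-all IPM GEMINI is at most the one-vs-one IPM GEMINI: ∑_{k=1}^K π(k)·D_F(q_k, p) ≤ ∑_{a=1}^K ∑_{b=1}^K π(a)·π(b)·D_F(q_a, q_b). -/
open Finset

/-- Indexed version, with the genuine supremum over a nonempty bounded family. -/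
theorem gemini_indexed {X ι : Type*} [Fintype X] [Nonempty ι]
    (p : X → ℝ) (K : ℕ)
    (c : X → Fin K → ℝ) (hc1 : ∀ x, ∑ k, c x k = 1)
    (pr : Fin K → ℝ) (hpr1 : ∑ k, pr k = 1) (hprpos : ∀ k, 0 < pr k)
    (q : Fin K → X → ℝ) (hq : ∀ k x, q k x = p x * c x k / pr k)
    (g : ι → X → ℝ) (M : ℝ) (hM : ∀ i x, |g i x| ≤ M) :
    ∑ k, pr k * (⨆ i, (∑ x, q k x * g i x - ∑ x, p x * g i x))
      ≤ ∑ a, ∑ b, pr a * pr b * (⨆ i, (∑ x, q a x * g i x - ∑ x, q b x * g i x)) := by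
  have bdd : ∀ r s : X → ℝ,
      BddAbove (Set.range fun i => ∑ x, r x * g i x - ∑ x, s x * g i x) := by
    intro r s
    refine ⟨∑ x, |r x - s x| * M, ?_⟩
    rintro _ ⟨i, rfl⟩
    simp only
    rw [← Finset.sum_sub_distrib]
    refine Finset.sum_le_sum fun x _ => ?_
    rw [← sub_mul]
    refine (le_abs_self _).trans ?_
    rw [abs_mul]
    exact mul_le_mul_of_nonneg_left (hM i x) (abs_nonneg _)
  have mix : ∀ f : X → ℝ, ∑ x, p x * f x = ∑ b, pr b * ∑ x, q b x * f x := by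
    intro f
    simp_rw [Finset.mul_sum]
    rw [Finset.sum_comm]
    refine Finset.sum_congr rfl fun x _ => ?_
    have h : ∀ b, pr b * (q b x * f x) = c x b * (p x * f x) := by
      intro b
      have := (hprpos b).ne'
      rw [hq]
      field_simp
    simp_rw [h]
    rw [← Finset.sum_mul, hc1, one_mul]
  refine Finset.sum_le_sum fun a _ => ?_
  simp_rw [mul_assoc]
  rw [← Finset.mul_sum]
  refine mul_le_mul_of_nonneg_left (ciSup_le fun i => ?_) (hprpos a).le
  have e : ∑ x, q a x * g i x - ∑ x, p x * g i x
      = ∑ b, pr b * (∑ x, q a x * g i x - ∑ x, q b x * g i x) := by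
    simp_rw [mul_sub]
    rw [Finset.sum_sub_distrib, ← Finset.sum_mul, hpr1, one_mul, mix]
  rw [e]
  exact Finset.sum_le_sum fun b _ =>
    mul_le_mul_of_nonneg_left (le_ciSup (bdd (q a) (q b)) i) (hprpos b).le

/-- In the finite discriminative clustering setup, for every
nonempty uniformly bounded family `F` of functions `X → ℝ`, the one-vs-all IPM
GEMINI is at most the one-vs-one IPM GEMINI. -/
theorem gemini_ova_le_ovo_ipm
    {X : Type*} [Fintype X] [Nonempty X]
    (p : X → ℝ) (hp : ∀ x, 0 < p x) (hp1 : ∑ x, p x = 1)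
    (K : ℕ) (hK : 0 < K)
    (c : X → Fin K → ℝ) (hc : ∀ x k, 0 ≤ c x k) (hc1 : ∀ x, ∑ k, c x k = 1)
    (pr : Fin K → ℝ) (hpr : ∀ k, pr k = ∑ x, p x * c x k) (hprpos : ∀ k, 0 < pr k)
    (q : Fin K → X → ℝ) (hq : ∀ k x, q k x = p x * c x k / pr k)
    (F : Set (X → ℝ)) (hFne : F.Nonempty)
    (hFbd : ∃ M, ∀ f ∈ F, ∀ x, |f x| ≤ M)
    (D : (X → ℝ) → (X → ℝ) → ℝ)
    (hD : ∀ r s, D r s = ⨆ f ∈ F, (∑ x, r x * f x - ∑ x, s x * f x)) :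
    ∑ k, pr k * D (q k) p ≤ ∑ a, ∑ b, pr a * pr b * D (q a) (q b) := by
  classical
  obtain ⟨M, hM⟩ := hFbd
  have hpr1 : ∑ k, pr k = 1 := by
    simp_rw [hpr]
    rw [Finset.sum_comm]
    simp_rw [← Finset.mul_sum, hc1, mul_one]
    exact hp1
  -- the inner supremum over the empty type is `0`, the value at the zero function
  have hD' : ∀ r s, D r s = ⨆ f : X → ℝ,
      (∑ x, r x * (if f ∈ F then f else 0) x - ∑ x, s x * (if f ∈ F then f else 0) x) := by
    intro r s
    rw [hD]
    refine iSup_congr fun f => ?_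
    by_cases hf : f ∈ F <;> simp [hf]
  simp_rw [hD']
  refine gemini_indexed p K c hc1 pr hpr1 hprpos q hq
    (fun f : X → ℝ => if f ∈ F then f else 0) M ?_
  intro f x
  by_cases hf : f ∈ F
  · simpa [hf] using hM f hf x
  · obtain ⟨f₀, h₀⟩ := hFne
    simpa [hf] using (abs_nonneg _).trans (hM f₀ h₀ x)
end

section
/- In the finite discriminative clustering setup with K = 2 clusters, for every nonempty uniformly bounded family F of functions X → ℝ that is closed under negation (f ∈ F implies −f ∈ F), the one-vs-all and one-vs-one IPM GEMINIs coincide: ∑_{k=1}^2 π(k)·D_F(q_k, p) = ∑_{a=1}^2 ∑_{b=1}^2 π(a)·π(b)·D_F(q_a, q_b) = 2·π(1)·π(2)·D_F(q_1, q_2). -/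
open Finset

/-- In the finite discriminative clustering setup with `K = 2`
clusters, for every nonempty uniformly bounded family `F` closed under negation,
the one-vs-all and one-vs-one IPM GEMINIs coincide, and both equal
`2·π(1)·π(2)·D_F(q₁, q₂)`. -/
theorem gemini_ova_eq_ovo_ipm_binary
    {X : Type*} [Fintype X] [Nonempty X]
    (p : X → ℝ) (hp : ∀ x, 0 < p x) (hp1 : ∑ x, p x = 1)
    (c : X → Fin 2 → ℝ) (hc : ∀ x k, 0 ≤ c x k) (hc1 : ∀ x, ∑ k, c x k = 1)
    (pr : Fin 2 → ℝ) (hpr : ∀ k, pr k = ∑ x, p x * c x k) (hprpos : ∀ k, 0 < pr k)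
    (q : Fin 2 → X → ℝ) (hq : ∀ k x, q k x = p x * c x k / pr k)
    (F : Set (X → ℝ)) (hFne : F.Nonempty)
    (hFbd : ∃ M, ∀ f ∈ F, ∀ x, |f x| ≤ M)
    (hFneg : ∀ f ∈ F, (fun x => -f x) ∈ F)
    (D : (X → ℝ) → (X → ℝ) → ℝ)
    (hD : ∀ r s, D r s = ⨆ f ∈ F, (∑ x, r x * f x - ∑ x, s x * f x)) :
    (∑ k, pr k * D (q k) p = ∑ a, ∑ b, pr a * pr b * D (q a) (q b))
    ∧ (∑ a, ∑ b, pr a * pr b * D (q a) (q b) = 2 * pr 0 * pr 1 * D (q 0) (q 1)) := by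
  have hsum : pr 0 + pr 1 = 1 := by
    rw [hpr 0, hpr 1, ← Finset.sum_add_distrib, ← hp1]
    refine Finset.sum_congr rfl fun x _ => ?_
    have h := hc1 x
    rw [Fin.sum_univ_two] at h
    rw [← mul_add, h, mul_one]
  have h0 : pr 0 ≠ 0 := (hprpos 0).ne'
  have h1 : pr 1 ≠ 0 := (hprpos 1).ne'
  have hmix : ∀ x, p x = pr 0 * q 0 x + pr 1 * q 1 x := by
    intro x
    have h := hc1 x
    rw [Fin.sum_univ_two] at h
    rw [hq 0, hq 1, mul_div_cancel₀ _ h0, mul_div_cancel₀ _ h1, ← mul_add, h, mul_one]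
  have hself : ∀ r, D r r = 0 := by
    intro r
    rw [hD]
    simp
  have hscale : ∀ (t : ℝ) (r s u v : X → ℝ), 0 ≤ t →
      (∀ x, r x - s x = t * (u x - v x)) → D r s = t * D u v := by
    intro t r s u v ht h
    rw [hD, hD, Real.mul_iSup_of_nonneg ht]
    refine iSup_congr fun f => ?_
    rw [Real.mul_iSup_of_nonneg ht]
    refine iSup_congr fun _ => ?_
    rw [← Finset.sum_sub_distrib, ← Finset.sum_sub_distrib, Finset.mul_sum]
    refine Finset.sum_congr rfl fun x _ => ?_
    rw [← sub_mul, h x]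
    ring
  have hsymm : D (q 1) (q 0) = D (q 0) (q 1) := by
    rw [hD, hD]
    refine (Equiv.neg (X → ℝ)).iSup_congr fun f => ?_
    have hmem : -f ∈ F ↔ f ∈ F := by
      constructor
      · intro h
        have := hFneg _ h
        simpa using this
      · exact hFneg f
    refine iSup_congr_Prop hmem fun _ => ?_
    simp only [Equiv.neg_apply, Pi.neg_apply, mul_neg, Finset.sum_neg_distrib]
    ring
  have e0 : D (q 0) p = pr 1 * D (q 0) (q 1) := by
    refine hscale _ _ _ _ _ (hprpos 1).le fun x => ?_
    rw [hmix x]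
    linear_combination (-(q 0 x)) * hsum
  have e1 : D (q 1) p = pr 0 * D (q 1) (q 0) := by
    refine hscale _ _ _ _ _ (hprpos 0).le fun x => ?_
    rw [hmix x]
    linear_combination (-(q 1 x)) * hsum
  simp only [Fin.sum_univ_two, hself, e0, e1, hsymm]
  constructor <;> ring
end

section
/- In the finite discriminative clustering setup, let f : [0,∞) → ℝ be convex with f(1) = 0 and suppose L = lim_{t→∞} f(t)/t exists in ℝ. Then the one-vs-one f-divergence GEMINI satisfies ∑_{a=1}^K ∑_{b=1}^K π(a)·π(b)·D_f(q_a‖q_b) ≤ (f(0)+L) · ∑_{k=1}^K π(k)·(1−π(k)); in particular, for balanced proportions π(k) = 1/K the bound is (1 − 1/K)·(f(0)+L). Moreover, if the cluster-conditional distributions have pairwise disjoint supports (for all a ≠ b and all x, c(x,a)·c(x,b) = 0), then equality holds. -/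
open Finset

/-- Convex functions with recession slope `L` lie below `f 0 + L t`. -/
lemma aux_convex_bound (f : ℝ → ℝ) (hf : ConvexOn ℝ (Set.Ici 0) f)
    (L : ℝ) (hL : Filter.Tendsto (fun t => f t / t) Filter.atTop (nhds L))
    (t : ℝ) (ht : 0 ≤ t) : f t ≤ f 0 + L * t := by
  have h1 : Filter.Tendsto (fun T : ℝ => (1 - t * T⁻¹) * f 0 + t * (f T / T)) Filter.atTop
      (nhds ((1 - t * 0) * f 0 + t * L)) :=
    ((tendsto_const_nhds.sub (tendsto_inv_atTop_zero.const_mul t)).mul_const _).add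
      (hL.const_mul t)
  have h2 : f t ≤ (1 - t * 0) * f 0 + t * L := by
    refine ge_of_tendsto h1 ?_
    filter_upwards [Filter.eventually_gt_atTop t] with T hT
    have hT0 : 0 < T := lt_of_le_of_lt ht hT
    have h3 : t * T⁻¹ ≤ 1 := by
      rw [← div_eq_mul_inv, div_le_one hT0]; exact hT.le
    have h4 := hf.2 (Set.mem_Ici.2 le_rfl) (Set.mem_Ici.2 hT0.le)
      (sub_nonneg.2 h3) (by positivity : 0 ≤ t * T⁻¹) (by ring)
    simp only [smul_eq_mul, mul_zero, zero_add] at h4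
    have h5 : t * T⁻¹ * T = t := by field_simp
    rw [h5] at h4
    calc f t ≤ _ := h4
      _ = _ := by ring
  linarith

/-- In the finite discriminative clustering setup, for convex
`f : [0,∞) → ℝ` with `f(1) = 0` and `L = lim_{t→∞} f(t)/t ∈ ℝ`, the one-vs-one
f-divergence GEMINI is upper bounded by `(f(0)+L)·∑ₖ π(k)(1−π(k))`; for balanced
proportions this bound is `(1−1/K)(f(0)+L)`; and pairwise disjoint supports of the
cluster-conditional distributions imply equality. -/
theorem gemini_ovo_fdiv_upper_bound
    {X : Type*} [Fintype X] [Nonempty X]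
    (p : X → ℝ) (hp : ∀ x, 0 < p x) (hp1 : ∑ x, p x = 1)
    (K : ℕ) (hK : 0 < K)
    (c : X → Fin K → ℝ) (hc : ∀ x k, 0 ≤ c x k) (hc1 : ∀ x, ∑ k, c x k = 1)
    (pr : Fin K → ℝ) (hpr : ∀ k, pr k = ∑ x, p x * c x k) (hprpos : ∀ k, 0 < pr k)
    (q : Fin K → X → ℝ) (hq : ∀ k x, q k x = p x * c x k / pr k)
    (f : ℝ → ℝ) (hf : ConvexOn ℝ (Set.Ici 0) f) (hf1 : f 1 = 0)
    (L : ℝ) (hL : Filter.Tendsto (fun t => f t / t) Filter.atTop (nhds L))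
    (D : (X → ℝ) → (X → ℝ) → ℝ)
    (hD : ∀ r s, D r s =
      ∑ x ∈ Finset.univ.filter (fun x => 0 < s x), s x * f (r x / s x)
        + L * ∑ x ∈ Finset.univ.filter (fun x => s x = 0), r x) :
    (∑ a, ∑ b, pr a * pr b * D (q a) (q b)
        ≤ (f 0 + L) * ∑ k, pr k * (1 - pr k))
    ∧ ((∀ k, pr k = 1 / K) →
        (f 0 + L) * ∑ k, pr k * (1 - pr k) = (1 - 1 / (K : ℝ)) * (f 0 + L))
    ∧ ((∀ a b, a ≠ b → ∀ x, c x a * c x b = 0) →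
        ∑ a, ∑ b, pr a * pr b * D (q a) (q b)
          = (f 0 + L) * ∑ k, pr k * (1 - pr k)) := by
  have hq0 : ∀ k x, 0 ≤ q k x := fun k x => by
    rw [hq]; exact div_nonneg (mul_nonneg (hp x).le (hc x k)) (hprpos k).le
  have hq1 : ∀ k, ∑ x, q k x = 1 := fun k => by
    simp only [hq]
    rw [← Finset.sum_div, ← hpr, div_self (hprpos k).ne']
  have hpr1 : ∑ k, pr k = 1 := by
    simp only [hpr]
    rw [Finset.sum_comm]
    simp only [← Finset.mul_sum, hc1, mul_one, hp1]
  have hD' : ∀ a b, D (q a) (q b) =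
      ∑ x, (if 0 < q b x then q b x * f (q a x / q b x) else L * q a x) := by
    intro a b
    rw [hD, Finset.sum_ite, Finset.mul_sum]
    congr 1
    apply Finset.sum_congr _ (fun _ _ => rfl)
    ext x
    simp only [Finset.mem_filter, Finset.mem_univ, true_and, not_lt]
    exact ⟨fun h => h.le, fun h => le_antisymm h (hq0 b x)⟩
  have hS : ∀ a b, ∑ x, (f 0 * q b x + L * q a x) = f 0 + L := by
    intro a b
    rw [Finset.sum_add_distrib, ← Finset.mul_sum, ← Finset.mul_sum, hq1, hq1]
    ring
  have hDle : ∀ a b, D (q a) (q b) ≤ f 0 + L := by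
    intro a b
    rw [hD', ← hS a b]
    apply Finset.sum_le_sum
    intro x _
    split_ifs with h
    · have h1 := aux_convex_bound f hf L hL (q a x / q b x) (div_nonneg (hq0 a x) h.le)
      calc q b x * f (q a x / q b x) ≤ q b x * (f 0 + L * (q a x / q b x)) :=
            mul_le_mul_of_nonneg_left h1 h.le
        _ = _ := by field_simp
    · have : q b x = 0 := le_antisymm (not_lt.1 h) (hq0 b x)
      simp [this]
  have hDself : ∀ a, D (q a) (q a) = 0 := by
    intro a
    rw [hD']
    apply Finset.sum_eq_zero
    intro x _
    split_ifs with h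
    · rw [div_self h.ne', hf1, mul_zero]
    · have : q a x = 0 := le_antisymm (not_lt.1 h) (hq0 a x)
      simp [this]
  have hR : ∑ a, ∑ b, pr a * pr b * (if a = b then 0 else f 0 + L)
      = (f 0 + L) * ∑ k, pr k * (1 - pr k) := by
    rw [Finset.mul_sum]
    apply Finset.sum_congr rfl
    intro a _
    have h1 : ∀ b, pr a * pr b * (if a = b then 0 else f 0 + L)
        = pr a * (f 0 + L) * pr b - (if a = b then pr a * (f 0 + L) * pr b else 0) := by
      intro b
      split_ifs <;> ring
    simp only [h1]
    rw [Finset.sum_sub_distrib, ← Finset.mul_sum, hpr1]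
    simp
    ring
  refine ⟨?_, ?_, ?_⟩
  · rw [← hR]
    refine Finset.sum_le_sum fun a _ => Finset.sum_le_sum fun b _ => ?_
    apply mul_le_mul_of_nonneg_left _ (mul_pos (hprpos a) (hprpos b)).le
    split_ifs with h
    · rw [h, hDself]
    · exact hDle a b
  · intro h
    have h1 : ∑ k, pr k * (1 - pr k) = 1 - 1 / (K : ℝ) := by
      have h2 : ∀ k, pr k * (1 - pr k) = pr k * (1 - 1 / (K : ℝ)) := fun k => by rw [← h k]
      simp only [h2]
      rw [← Finset.sum_mul, hpr1, one_mul]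
    rw [h1, mul_comm]
  · intro hdis
    rw [← hR]
    refine Finset.sum_congr rfl fun a _ => Finset.sum_congr rfl fun b _ => ?_
    congr 1
    split_ifs with h
    · rw [h, hDself]
    · rw [hD', ← hS a b]
      apply Finset.sum_congr rfl
      intro x _
      split_ifs with hx
      · have h0 : q a x = 0 := by
          have hcb : c x b ≠ 0 := by
            intro h0
            rw [hq, h0] at hx
            simp at hx
          have hca : c x a = 0 := (mul_eq_zero.1 (hdis a b h x)).resolve_right hcb
          rw [hq, hca]; simp
        rw [h0]; simp [mul_comm]
      · have : q b x = 0 := le_antisymm (not_lt.1 hx) (hq0 b x)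
        simp [this]
end

section
/- Let X be a nonempty finite set, f : [0,∞) → ℝ convex with f(1) = 0, and suppose L = lim_{t→∞} f(t)/t exists in ℝ. For any probability mass functions r, s on X: (i) 0 ≤ D_f(r‖s) ≤ f(0) + L; (ii) if r and s have disjoint supports (r(x)·s(x) = 0 for all x), then D_f(r‖s) = f(0) + L; (iii) if f(0) + L > 0 and D_f(r‖s) = f(0) + L, then r and s have disjoint supports. -/
open Finset

theorem fdiv_key (f : ℝ → ℝ) (hf : ConvexOn ℝ (Set.Ici 0) f)
    (L : ℝ) (hL : Filter.Tendsto (fun t => f t / t) Filter.atTop (nhds L))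
    (a b : ℝ) (ha : 0 ≤ a) (hb : 0 ≤ b) : f (a + b) ≤ f a + L * b := by
  have h0 : Filter.Tendsto (fun T : ℝ => T⁻¹) Filter.atTop (nhds 0) := tendsto_inv_atTop_zero
  -- multiply the convexity inequality by (T - a) / T and pass to the limit
  have hl : Filter.Tendsto (fun T : ℝ => (1 - a * T⁻¹) * f (a + b)) Filter.atTop
      (nhds ((1 - a * 0) * f (a + b))) :=
    (tendsto_const_nhds.sub (h0.const_mul a)).mul_const _
  have hr : Filter.Tendsto (fun T : ℝ => (1 - a * T⁻¹ - b * T⁻¹) * f a + b * (f T / T))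
      Filter.atTop (nhds ((1 - a * 0 - b * 0) * f a + b * L)) :=
    (((tendsto_const_nhds.sub (h0.const_mul a)).sub (h0.const_mul b)).mul_const _).add
      (hL.const_mul b)
  have := le_of_tendsto_of_tendsto hl hr (by
    filter_upwards [Filter.eventually_gt_atTop (a + b)] with T hT
    have hTa : 0 < T - a := by linarith
    have hT0 : 0 < T := by linarith
    have hc := hf.2 (Set.mem_Ici.mpr ha) (Set.mem_Ici.mpr hT0.le)
      (show 0 ≤ (T - a - b) / (T - a) from div_nonneg (by linarith) hTa.le)
      (show 0 ≤ b / (T - a) from div_nonneg hb hTa.le) (by field_simp; ring)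
    have he : ((T - a - b) / (T - a)) • a + (b / (T - a)) • T = a + b := by
      simp only [smul_eq_mul]; field_simp; ring
    rw [he] at hc
    simp only [smul_eq_mul] at hc
    have hm := mul_le_mul_of_nonneg_left hc (div_pos hTa hT0).le
    have e1 : (1 - a * T⁻¹) * f (a + b) = (T - a) / T * f (a + b) := by field_simp
    have e2 : (1 - a * T⁻¹ - b * T⁻¹) * f a + b * (f T / T)
        = (T - a) / T * ((T - a - b) / (T - a) * f a + b / (T - a) * f T) := by field_simp
    rw [e1, e2]; exact hm)
  linarith

/-- For convex `f : [0,∞) → ℝ` with `f(1) = 0` and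
`L = lim_{t→∞} f(t)/t ∈ ℝ`, and pmfs `r, s` on a nonempty finite set:
(i) `0 ≤ D_f(r‖s) ≤ f(0)+L`; (ii) disjoint supports imply `D_f(r‖s) = f(0)+L`;
(iii) if `f(0)+L > 0` and `D_f(r‖s) = f(0)+L`, then the supports are disjoint. -/
theorem extended_fdiv_bounds_and_disjoint_support
    {X : Type*} [Fintype X] [Nonempty X]
    (f : ℝ → ℝ) (hf : ConvexOn ℝ (Set.Ici 0) f) (hf1 : f 1 = 0)
    (L : ℝ) (hL : Filter.Tendsto (fun t => f t / t) Filter.atTop (nhds L))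
    (r s : X → ℝ) (hr0 : ∀ x, 0 ≤ r x) (hs0 : ∀ x, 0 ≤ s x)
    (hr1 : ∑ x, r x = 1) (hs1 : ∑ x, s x = 1)
    (D : ℝ)
    (hD : D = ∑ x ∈ Finset.univ.filter (fun x => 0 < s x), s x * f (r x / s x)
        + L * ∑ x ∈ Finset.univ.filter (fun x => s x = 0), r x) :
    (0 ≤ D ∧ D ≤ f 0 + L)
    ∧ ((∀ x, r x * s x = 0) → D = f 0 + L)
    ∧ (0 < f 0 + L → D = f 0 + L → ∀ x, r x * s x = 0) := by
  have hsplit : ∀ g : X → ℝ, ∑ x, g x = ∑ x ∈ Finset.univ.filter (fun x => 0 < s x), g x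
      + ∑ x ∈ Finset.univ.filter (fun x => s x = 0), g x := by
    intro g
    rw [← Finset.sum_filter_add_sum_filter_not Finset.univ (fun x => 0 < s x) g]
    congr 2
    ext x
    simp only [Finset.mem_filter, Finset.mem_univ, true_and, not_lt]
    exact ⟨fun h => le_antisymm h (hs0 x), fun h => h.le⟩
  have key := fdiv_key f hf L hL
  have hbd : ∀ t, 0 ≤ t → f t ≤ f 0 + L * t := fun t ht => by
    simpa using key 0 t le_rfl ht
  set d : X → ℝ := fun x => if 0 < s x then s x * f (r x / s x) else L * r x with hd
  have hDd : D = ∑ x, d x := by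
    rw [hD, hsplit d, Finset.mul_sum]
    congr 1
    · refine Finset.sum_congr rfl fun x hx => ?_
      simp only [Finset.mem_filter, Finset.mem_univ, true_and] at hx
      simp [hd, hx]
    · refine Finset.sum_congr rfl fun x hx => ?_
      simp only [Finset.mem_filter, Finset.mem_univ, true_and] at hx
      simp [hd, hx]
  have htot : ∑ x, (s x * f 0 + L * r x) = f 0 + L := by
    rw [Finset.sum_add_distrib, ← Finset.sum_mul, ← Finset.mul_sum, hr1, hs1]; ring
  have hle : ∀ x, d x ≤ s x * f 0 + L * r x := by
    intro x
    by_cases hx : 0 < s x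
    · simp only [hd, if_pos hx]
      have h := mul_le_mul_of_nonneg_left (hbd (r x / s x) (div_nonneg (hr0 x) hx.le)) hx.le
      have e : s x * (f 0 + L * (r x / s x)) = s x * f 0 + L * r x := by field_simp
      linarith
    · have : s x = 0 := le_antisymm (not_lt.mp hx) (hs0 x)
      simp [hd, this]
  refine ⟨⟨?_, ?_⟩, ?_, ?_⟩
  · set A := Finset.univ.filter (fun x => 0 < s x) with hA
    set p := ∑ x ∈ A, r x with hp
    have hs1' := hsplit s
    have hr1' := hsplit r
    have hz : ∑ x ∈ Finset.univ.filter (fun x => s x = 0), s x = 0 :=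
      Finset.sum_eq_zero fun x hx => (Finset.mem_filter.mp hx).2
    rw [hs1, hz, add_zero] at hs1'
    rw [hr1] at hr1'
    have hApos : ∀ x ∈ A, 0 < s x := fun x hx => (Finset.mem_filter.mp hx).2
    have hJ := hf.map_sum_le (t := A) (w := s) (p := fun x => r x / s x)
      (fun x _ => hs0 x) hs1'.symm (fun x hx => div_nonneg (hr0 x) (hs0 x))
    have e : ∑ x ∈ A, s x • (r x / s x) = p := by
      refine Finset.sum_congr rfl fun x hx => ?_
      have := hApos x hx
      simp only [smul_eq_mul]; field_simp
    rw [e] at hJ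
    simp only [smul_eq_mul] at hJ
    have hp0 : 0 ≤ p := Finset.sum_nonneg fun x _ => hr0 x
    have hq0 : 0 ≤ ∑ x ∈ Finset.univ.filter (fun x => s x = 0), r x :=
      Finset.sum_nonneg fun x _ => hr0 x
    have hk := key p _ hp0 hq0
    rw [← hr1', hf1] at hk
    linarith
  · rw [hDd, ← htot]
    exact Finset.sum_le_sum fun x _ => hle x
  · intro h
    rw [hDd, ← htot]
    refine Finset.sum_congr rfl fun x _ => ?_
    by_cases hx : 0 < s x
    · have : r x = 0 := (mul_eq_zero.mp (h x)).resolve_right hx.ne'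
      simp [hd, hx, this]
    · have : s x = 0 := le_antisymm (not_lt.mp hx) (hs0 x)
      simp [hd, this]
  · intro hpos hEq x
    by_contra hne
    have hrx : 0 < r x := lt_of_le_of_ne (hr0 x) (Ne.symm (left_ne_zero_of_mul hne))
    have hsx : 0 < s x := lt_of_le_of_ne (hs0 x) (Ne.symm (right_ne_zero_of_mul hne))
    have hstrict : ∀ t, 0 < t → f t < f 0 + L * t := by
      intro t ht
      rcases le_total 1 t with h1 | h1
      · have := key 1 (t - 1) zero_le_one (by linarith)
        rw [add_sub_cancel, hf1] at this
        linarith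
      · have hc := hf.2 (Set.mem_Ici.mpr (le_refl (0 : ℝ))) (Set.mem_Ici.mpr (zero_le_one' ℝ))
          (show 0 ≤ 1 - t by linarith) ht.le (by ring)
        simp only [smul_eq_mul, mul_zero, mul_one, zero_add, hf1, add_zero] at hc
        nlinarith [mul_pos ht hpos]
    have hlt : d x < s x * f 0 + L * r x := by
      simp only [hd, if_pos hsx]
      have h := mul_lt_mul_of_pos_left (hstrict (r x / s x) (div_pos hrx hsx)) hsx
      have e : s x * (f 0 + L * (r x / s x)) = s x * f 0 + L * r x := by field_simp
      linarith
    have := Finset.sum_lt_sum (fun y _ => hle y) ⟨x, Finset.mem_univ x, hlt⟩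
    rw [htot, ← hDd] at this
    linarith
end

section
/- Let μ be a probability measure on a measurable space Ω, β ∈ (0,1), A ⊆ Ω measurable with μ(A) = 1/2, and B ⊆ Ω measurable with μ(B) = β. Then the difference of mutual informations of the two sharp-boundary models converges as the boundaries turn sharper: lim_{ε→0⁺} (I_A(ε) − I_B(ε)) = log 2 + β·log β + (1−β)·log(1−β), i.e. the limit equals log 2 minus the binary entropy of β. In particular, if β = 1/2, the two models have the same mutual information in the limit. -/
open MeasureTheory Filter

lemma integral_two_values {Ω : Type*} [MeasurableSpace Ω] (μ : Measure Ω) [IsProbabilityMeasure μ]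
    (S : Set Ω) (hS : MeasurableSet S) (f : Ω → ℝ) (a b : ℝ)
    (h1 : ∀ x ∈ S, f x = a) (h2 : ∀ x ∉ S, f x = b) :
    ∫ x, f x ∂μ = μ.real S * a + (1 - μ.real S) * b := by
  have hf : f = fun x => S.indicator (fun _ => a) x + Sᶜ.indicator (fun _ => b) x := by
    funext x
    by_cases hx : x ∈ S
    · simp [hx, h1 x hx]
    · simp [hx, h2 x hx]
  rw [hf, integral_add ((integrable_const a).indicator hS)
    ((integrable_const b).indicator hS.compl), integral_indicator_const _ hS,
    integral_indicator_const _ hS.compl, probReal_compl_eq_one_sub hS]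
  simp

lemma mi_tendsto {Ω : Type*} [MeasurableSpace Ω] (μ : Measure Ω) [IsProbabilityMeasure μ]
    (S : Set Ω) (hS : MeasurableSet S) (m : ℝ) (hm : μ.real S = m) (h0 : 0 < m) (h1 : m < 1)
    (η : ℝ → Set Ω → Ω → ℝ)
    (hη : ∀ ε S x, η ε S x = (1 - ε) * S.indicator 1 x + ε * Sᶜ.indicator 1 x)
    (πS : ℝ → Set Ω → ℝ) (hπS : ∀ ε S, πS ε S = ∫ x, η ε S x ∂μ)
    (I : ℝ → Set Ω → ℝ)
    (hI : ∀ ε S, I ε S = ∫ x, (η ε S x * Real.log (η ε S x / πS ε S)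
        + (1 - η ε S x) * Real.log ((1 - η ε S x) / (1 - πS ε S))) ∂μ) :
    Tendsto (fun ε => I ε S) (nhdsWithin 0 (Set.Ioi 0)) (nhds (Real.binEntropy m)) := by
  have key : ∀ ε ∈ Set.Ioo (0 : ℝ) 1, Real.binEntropy (m * (1 - ε) + (1 - m) * ε)
      - Real.binEntropy ε = I ε S := by
    rintro ε ⟨e0, e1⟩
    have i1 : ∀ x ∈ S, η ε S x = 1 - ε := by intro x hx; simp [hη, hx]
    have i2 : ∀ x ∉ S, η ε S x = ε := by intro x hx; simp [hη, hx]
    have hp : πS ε S = m * (1 - ε) + (1 - m) * ε := by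
      rw [hπS, integral_two_values μ S hS _ _ _ i1 i2, hm]
    have a1 : 0 < m * (1 - ε) := mul_pos h0 (by linarith)
    have a2 : 0 < (1 - m) * ε := mul_pos (by linarith) e0
    have a3 : 0 < m * ε := mul_pos h0 e0
    have a4 : 0 < (1 - m) * (1 - ε) := mul_pos (by linarith) (by linarith)
    rw [hI, integral_two_values μ S hS _
      ((1 - ε) * Real.log ((1 - ε) / πS ε S) + (1 - (1 - ε)) *
        Real.log ((1 - (1 - ε)) / (1 - πS ε S)))
      (ε * Real.log (ε / πS ε S) + (1 - ε) * Real.log ((1 - ε) / (1 - πS ε S)))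
      (fun x hx => by rw [i1 x hx]) (fun x hx => by rw [i2 x hx]), hm, hp]
    have p0 : 0 < m * (1 - ε) + (1 - m) * ε := by linarith
    have p1 : 0 < 1 - (m * (1 - ε) + (1 - m) * ε) := by nlinarith
    have e2 : 0 < 1 - ε := by linarith
    rw [sub_sub_cancel, Real.log_div e2.ne' p0.ne', Real.log_div e0.ne' p1.ne',
      Real.log_div e0.ne' p0.ne', Real.log_div e2.ne' p1.ne']
    simp only [Real.binEntropy, Real.log_inv]
    ring
  have hc : Continuous (fun ε : ℝ => Real.binEntropy (m * (1 - ε) + (1 - m) * ε)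
      - Real.binEntropy ε) :=
    (Real.binEntropy_continuous.comp (by fun_prop)).sub Real.binEntropy_continuous
  have ht := (hc.tendsto 0).mono_left (nhdsWithin_le_nhds (s := Set.Ioi 0))
  simp only [sub_zero, mul_one, mul_zero, add_zero, Real.binEntropy_zero] at ht
  refine ht.congr' ?_
  filter_upwards [Ioo_mem_nhdsGT (zero_lt_one (α := ℝ))] with ε hε using key ε hε

/-- As the decision boundaries turn sharper (`ε → 0⁺`), the
difference of mutual informations between the correct boundary model (built on
`A` with `μ(A) = 1/2`) and the misplaced boundary model (built on `B` with
`μ(B) = β`) converges to `log 2 − H(β) = log 2 + β·log β + (1−β)·log(1−β)`;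
in particular for `β = 1/2` the two models have the same MI in the limit. -/
theorem mi_difference_limit_sharp_boundary
    {Ω : Type*} [MeasurableSpace Ω] (μ : Measure Ω) [IsProbabilityMeasure μ]
    (β : ℝ) (hβ : β ∈ Set.Ioo (0 : ℝ) 1)
    (A B : Set Ω) (hA : MeasurableSet A) (hB : MeasurableSet B)
    (hAμ : μ A = 1 / 2) (hBμ : μ B = ENNReal.ofReal β)
    (η : ℝ → Set Ω → Ω → ℝ)
    (hη : ∀ ε S x, η ε S x = (1 - ε) * S.indicator 1 x + ε * Sᶜ.indicator 1 x)
    (πS : ℝ → Set Ω → ℝ) (hπS : ∀ ε S, πS ε S = ∫ x, η ε S x ∂μ)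
    (I : ℝ → Set Ω → ℝ)
    (hI : ∀ ε S, I ε S = ∫ x, (η ε S x * Real.log (η ε S x / πS ε S)
        + (1 - η ε S x) * Real.log ((1 - η ε S x) / (1 - πS ε S))) ∂μ) :
    Tendsto (fun ε => I ε A - I ε B) (nhdsWithin 0 (Set.Ioi 0))
      (nhds (Real.log 2 + β * Real.log β + (1 - β) * Real.log (1 - β)))
    ∧ (β = 1 / 2 →
        Tendsto (fun ε => I ε A - I ε B) (nhdsWithin 0 (Set.Ioi 0)) (nhds 0)) := by
  have hA' := mi_tendsto μ A hA (1 / 2) (by simp [Measure.real, hAμ]) (by norm_num) (by norm_num)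
    η hη πS hπS I hI
  have hB' := mi_tendsto μ B hB β (by simp [Measure.real, hBμ, hβ.1.le]) hβ.1 hβ.2
    η hη πS hπS I hI
  have h := hA'.sub hB'
  refine ⟨?_, ?_⟩
  · convert h using 2
    rw [one_div, Real.binEntropy_two_inv]
    simp only [Real.binEntropy, Real.log_inv]
    ring
  · rintro rfl
    simpa using h
end

section
/- In the finite discriminative clustering setup with strictly positive posterior (c(x,k) > 0 for all x, k), the one-vs-one KL GEMINI equals the expected symmetric Kullback-Leibler divergence between posterior and marginal: ∑_{a=1}^K ∑_{b=1}^K π(a)·π(b)·∑_{x∈X} q_a(x)·log(q_a(x)/q_b(x)) = ∑_{x∈X} p(x) · ( ∑_{k=1}^K c(x,k)·log(c(x,k)/π(k)) + ∑_{k=1}^K π(k)·log(π(k)/c(x,k)) ). -/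
open Finset

/-- In the finite discriminative clustering setup with strictly
positive posterior, the one-vs-one KL GEMINI equals the expected symmetric
Kullback-Leibler divergence between the posterior and the marginal. -/
theorem gemini_ovo_kl_eq_expected_symmetric_kl
    {X : Type*} [Fintype X] [Nonempty X]
    (p : X → ℝ) (hp : ∀ x, 0 < p x) (hp1 : ∑ x, p x = 1)
    (K : ℕ) (hK : 0 < K)
    (c : X → Fin K → ℝ) (hcpos : ∀ x k, 0 < c x k) (hc1 : ∀ x, ∑ k, c x k = 1)
    (pr : Fin K → ℝ) (hpr : ∀ k, pr k = ∑ x, p x * c x k) (hprpos : ∀ k, 0 < pr k)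
    (q : Fin K → X → ℝ) (hq : ∀ k x, q k x = p x * c x k / pr k) :
    ∑ a, ∑ b, pr a * pr b * ∑ x, q a x * Real.log (q a x / q b x)
      = ∑ x, p x * ((∑ k, c x k * Real.log (c x k / pr k))
          + (∑ k, pr k * Real.log (pr k / c x k))) := by
  have hS : ∑ k, pr k = 1 := by
    simp_rw [hpr]
    rw [Finset.sum_comm]
    simp_rw [← Finset.mul_sum, hc1, mul_one]
    exact hp1
  have hL : ∀ a b x, pr a * pr b * (q a x * Real.log (q a x / q b x))
      = p x * (pr b * (c x a * Real.log (c x a / pr a))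
          + c x a * (pr b * Real.log (pr b / c x b))) := by
    intro a b x
    have h1 := (hp x).ne'
    have h2 := (hcpos x a).ne'
    have h3 := (hcpos x b).ne'
    have h4 := (hprpos a).ne'
    have h5 := (hprpos b).ne'
    have e : q a x / q b x = (c x a / pr a) * (pr b / c x b) := by
      rw [hq, hq]
      field_simp
    rw [e, Real.log_mul (div_ne_zero h2 h4) (div_ne_zero h5 h3), hq]
    field_simp
  simp_rw [Finset.mul_sum (s := (Finset.univ : Finset X)), hL]
  have hcomm : ∀ F : Fin K → Fin K → X → ℝ,
      ∑ a, ∑ b, ∑ x, F a b x = ∑ x, ∑ a, ∑ b, F a b x := by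
    intro F
    rw [Finset.sum_comm]
    simp_rw [Finset.sum_comm (s := (Finset.univ : Finset (Fin K)))
      (t := (Finset.univ : Finset X))]
    refine Finset.sum_congr rfl fun x _ => ?_
    rw [Finset.sum_comm]
  rw [hcomm]
  refine Finset.sum_congr rfl fun x _ => ?_
  simp_rw [← Finset.mul_sum, Finset.sum_add_distrib, ← Finset.mul_sum, ← Finset.sum_mul, hS, hc1,
    one_mul]
end

section
/- In the finite discriminative clustering setup, the one-vs-one squared Hellinger GEMINI equals twice the expected variance of the relative square-root certainty: ∑_{a=1}^K ∑_{b=1}^K π(a)·π(b)·H²(q_a, q_b) = 2·∑_{x∈X} p(x)·Var_{k∼π}(√(c(x,k)/π(k))), where Var_{k∼π}(v) = ∑_{k=1}^K π(k)·v(k)² − (∑_{k=1}^K π(k)·v(k))². -/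
open Finset

theorem sum_sq_diff_aux {K : ℕ} (w v : Fin K → ℝ) (hw : ∑ k, w k = 1) :
    ∑ a, ∑ b, w a * w b * (v a - v b) ^ 2
      = 2 * ((∑ k, w k * v k ^ 2) - (∑ k, w k * v k) ^ 2) := by
  have h : ∀ a b, w a * w b * (v a - v b) ^ 2
      = (w a * v a ^ 2) * w b + w a * (w b * v b ^ 2)
        - 2 * ((w a * v a) * (w b * v b)) := by
    intro a b; ring
  simp only [h, Finset.sum_sub_distrib, Finset.sum_add_distrib, ← Finset.mul_sum,
    ← Finset.sum_mul, hw]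
  ring

/-- In the finite discriminative clustering setup, the one-vs-one
squared Hellinger GEMINI equals twice the expected variance (over `k ∼ π`) of the
relative square-root certainty `√(c(x,k)/π(k))`. -/
theorem gemini_ovo_hellinger_eq_expected_variance
    {X : Type*} [Fintype X] [Nonempty X]
    (p : X → ℝ) (hp : ∀ x, 0 < p x) (hp1 : ∑ x, p x = 1)
    (K : ℕ) (hK : 0 < K)
    (c : X → Fin K → ℝ) (hc : ∀ x k, 0 ≤ c x k) (hc1 : ∀ x, ∑ k, c x k = 1)
    (pr : Fin K → ℝ) (hpr : ∀ k, pr k = ∑ x, p x * c x k) (hprpos : ∀ k, 0 < pr k)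
    (q : Fin K → X → ℝ) (hq : ∀ k x, q k x = p x * c x k / pr k) :
    ∑ a, ∑ b, pr a * pr b * ∑ x, (Real.sqrt (q a x) - Real.sqrt (q b x)) ^ 2
      = 2 * ∑ x, p x *
          ((∑ k, pr k * (Real.sqrt (c x k / pr k)) ^ 2)
            - (∑ k, pr k * Real.sqrt (c x k / pr k)) ^ 2) := by
  have hw : ∑ k, pr k = 1 := by
    simp only [hpr]
    rw [Finset.sum_comm]
    simp only [← Finset.mul_sum, hc1, mul_one, hp1]
  have hs : ∀ k x, Real.sqrt (q k x) = Real.sqrt (p x) * Real.sqrt (c x k / pr k) := by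
    intro k x
    rw [hq, mul_div_assoc, Real.sqrt_mul (hp x).le]
  have ht : ∀ a b x, pr a * pr b * (Real.sqrt (q a x) - Real.sqrt (q b x)) ^ 2
      = p x * (pr a * pr b * (Real.sqrt (c x a / pr a) - Real.sqrt (c x b / pr b)) ^ 2) := by
    intro a b x
    rw [hs, hs, ← mul_sub, mul_pow, Real.sq_sqrt (hp x).le]
    ring
  calc _ = ∑ a, ∑ b, ∑ x, p x * (pr a * pr b *
        (Real.sqrt (c x a / pr a) - Real.sqrt (c x b / pr b)) ^ 2) := by
        simp only [Finset.mul_sum, ht]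
    _ = ∑ x, ∑ a, ∑ b, p x * (pr a * pr b *
        (Real.sqrt (c x a / pr a) - Real.sqrt (c x b / pr b)) ^ 2) := by
        rw [Finset.sum_comm (s := (Finset.univ : Finset X))]
        exact Finset.sum_congr rfl fun a _ => Finset.sum_comm
    _ = _ := by
        rw [Finset.mul_sum]
        refine Finset.sum_congr rfl fun x _ => ?_
        simp only [← Finset.mul_sum]
        rw [sum_sq_diff_aux pr (fun k => Real.sqrt (c x k / pr k)) hw]
        ring
end

section
/- In the finite discriminative clustering setup, the one-vs-all squared Hellinger GEMINI admits the estimable form ∑_{k=1}^K π(k)·H²(q_k, p) = 2 − 2·∑_{x∈X} p(x)·∑_{k=1}^K π(k)·√(c(x,k)/π(k)) (equivalently, 2 − 2·∑_{x∈X} p(x)·∑_{k=1}^K √(π(k)·c(x,k))). -/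
open Finset

/-- In the finite discriminative clustering setup, the one-vs-all
squared Hellinger GEMINI admits the estimable form
`∑ₖ π(k)·H²(qₖ, p) = 2 − 2·∑ₓ p(x)·∑ₖ π(k)·√(c(x,k)/π(k))`, equivalently
`2 − 2·∑ₓ p(x)·∑ₖ √(π(k)·c(x,k))`. -/
theorem gemini_ova_hellinger_estimable_form
    {X : Type*} [Fintype X] [Nonempty X]
    (p : X → ℝ) (hp : ∀ x, 0 < p x) (hp1 : ∑ x, p x = 1)
    (K : ℕ) (hK : 0 < K)
    (c : X → Fin K → ℝ) (hc : ∀ x k, 0 ≤ c x k) (hc1 : ∀ x, ∑ k, c x k = 1)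
    (pr : Fin K → ℝ) (hpr : ∀ k, pr k = ∑ x, p x * c x k) (hprpos : ∀ k, 0 < pr k)
    (q : Fin K → X → ℝ) (hq : ∀ k x, q k x = p x * c x k / pr k) :
    (∑ k, pr k * ∑ x, (Real.sqrt (q k x) - Real.sqrt (p x)) ^ 2
        = 2 - 2 * ∑ x, p x * ∑ k, pr k * Real.sqrt (c x k / pr k))
    ∧ (∑ k, pr k * ∑ x, (Real.sqrt (q k x) - Real.sqrt (p x)) ^ 2
        = 2 - 2 * ∑ x, p x * ∑ k, Real.sqrt (pr k * c x k)) := by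
  have hterm : ∀ k x, pr k * (Real.sqrt (q k x) - Real.sqrt (p x)) ^ 2
      = p x * c x k + pr k * p x - 2 * (p x * (pr k * Real.sqrt (c x k / pr k))) := by
    intro k x
    have h1 : Real.sqrt (q k x) = Real.sqrt (p x) * Real.sqrt (c x k / pr k) := by
      rw [hq, mul_div_assoc, Real.sqrt_mul (hp x).le]
    have h2 : Real.sqrt (p x) ^ 2 = p x := Real.sq_sqrt (hp x).le
    have h3 : pr k * Real.sqrt (c x k / pr k) ^ 2 = c x k := by
      rw [Real.sq_sqrt (div_nonneg (hc x k) (hprpos k).le)]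
      exact mul_div_cancel₀ _ (hprpos k).ne'
    rw [h1]
    generalize Real.sqrt (c x k / pr k) = s at *
    generalize Real.sqrt (p x) = t at *
    rw [← h3, ← h2]
    ring
  have hA : ∑ x, ∑ k, p x * c x k = 1 := by
    simp only [← Finset.mul_sum, hc1, mul_one, hp1]
  have hB : ∑ k, pr k = 1 := by
    simp only [hpr]
    rw [Finset.sum_comm, hA]
  have hB2 : ∑ x, ∑ k, pr k * p x = 1 := by
    simp only [← Finset.sum_mul, hB, one_mul, hp1]
  have main : ∑ k, pr k * ∑ x, (Real.sqrt (q k x) - Real.sqrt (p x)) ^ 2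
        = 2 - 2 * ∑ x, p x * ∑ k, pr k * Real.sqrt (c x k / pr k) := by
    simp only [Finset.mul_sum, hterm]
    rw [Finset.sum_comm]
    simp only [Finset.sum_sub_distrib, Finset.sum_add_distrib, hA, hB2]
    norm_num
  refine ⟨main, ?_⟩
  rw [main]
  have h : ∀ x k, pr k * Real.sqrt (c x k / pr k) = Real.sqrt (pr k * c x k) := by
    intro x k
    have h0 := hprpos k
    have e : pr k * c x k = pr k ^ 2 * (c x k / pr k) := by field_simp
    rw [e, Real.sqrt_mul (sq_nonneg _), Real.sqrt_sq h0.le]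
  simp only [h]
end

section
/- Let K be a positive integer, α ∈ (0,2) with α ≠ 1, and π : Fin K → ℝ with π(k) ≥ 0 for all k and ∑_{k=1}^K π(k) = 1. Then the Proposition-1 upper bound on the one-vs-all α-divergence GEMINI is maximal for balanced proportions: (α(α−1))^{-1}·(−1 + ∑_{k=1}^K π(k)^{2−α}) ≤ (α(α−1))^{-1}·(K^{α−1} − 1), with the right-hand side attained when π(k) = 1/K for all k. -/
open Finset

/-- For `α ∈ (0,2)`, `α ≠ 1`, and cluster proportions `π`
(nonnegative, summing to 1), the Proposition-1 upper bound
`(α(α−1))⁻¹·(−1 + ∑ₖ π(k)^{2−α})` on the one-vs-all α-divergence GEMINI is maximal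
for balanced proportions, with maximum `(α(α−1))⁻¹·(K^{α−1} − 1)` attained when
`π(k) = 1/K` for all `k`. -/
theorem gemini_alpha_bound_maximal_for_balanced
    (K : ℕ) (hK : 0 < K)
    (α : ℝ) (hα : α ∈ Set.Ioo (0 : ℝ) 2) (hα1 : α ≠ 1)
    (pr : Fin K → ℝ) (hpr0 : ∀ k, 0 ≤ pr k) (hpr1 : ∑ k, pr k = 1) :
    ((α * (α - 1))⁻¹ * (-1 + ∑ k, pr k ^ (2 - α))
        ≤ (α * (α - 1))⁻¹ * ((K : ℝ) ^ (α - 1) - 1))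
    ∧ ((∀ k, pr k = 1 / K) →
        (α * (α - 1))⁻¹ * (-1 + ∑ k, pr k ^ (2 - α))
          = (α * (α - 1))⁻¹ * ((K : ℝ) ^ (α - 1) - 1)) := by
  obtain ⟨h0, h2⟩ := hα
  have hKr : (0 : ℝ) < K := by exact_mod_cast hK
  have hw1 : ∑ _k : Fin K, (K : ℝ)⁻¹ = 1 := by
    simp [hKr.ne']
  have hw0 : ∀ k ∈ (Finset.univ : Finset (Fin K)), (0 : ℝ) ≤ (K : ℝ)⁻¹ :=
    fun _ _ => by positivity
  have hmem : ∀ k ∈ (Finset.univ : Finset (Fin K)), pr k ∈ Set.Ici (0 : ℝ) :=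
    fun k _ => hpr0 k
  have hpow : (K : ℝ) * ((K : ℝ)⁻¹) ^ (2 - α) = (K : ℝ) ^ (α - 1) := by
    rw [Real.inv_rpow hKr.le, ← Real.rpow_neg hKr.le]
    nth_rewrite 1 [← Real.rpow_one (K : ℝ)]
    rw [← Real.rpow_add hKr]
    congr 1
    ring
  refine ⟨?_, ?_⟩
  · rcases lt_or_gt_of_ne hα1 with h | h
    · have hc : (α * (α - 1))⁻¹ ≤ 0 := by
        apply inv_nonpos.2
        nlinarith
      apply mul_le_mul_of_nonpos_left _ hc
      have hj := (convexOn_rpow (p := 2 - α) (by linarith)).map_sum_le hw0 hw1 hmem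
      simp only [smul_eq_mul, ← Finset.mul_sum, hpr1, mul_one] at hj
      have hj2 := mul_le_mul_of_nonneg_left hj hKr.le
      rw [hpow, mul_inv_cancel_left₀ hKr.ne'] at hj2
      linarith
    · have hc : 0 ≤ (α * (α - 1))⁻¹ := by
        apply inv_nonneg.2
        nlinarith
      apply mul_le_mul_of_nonneg_left _ hc
      have hj := (Real.concaveOn_rpow (p := 2 - α) (by linarith) (by linarith)).le_map_sum
        hw0 hw1 hmem
      simp only [smul_eq_mul, ← Finset.mul_sum, hpr1, mul_one] at hj
      have hj2 := mul_le_mul_of_nonneg_left hj hKr.le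
      rw [hpow, mul_inv_cancel_left₀ hKr.ne'] at hj2
      linarith
  · intro hb
    have hs : ∑ k, pr k ^ (2 - α) = (K : ℝ) ^ (α - 1) := by
      simp only [hb, one_div, Finset.sum_const, Finset.card_univ, Fintype.card_fin, nsmul_eq_mul]
      exact hpow
    rw [hs]
    ring
end
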